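/- Let G be a finitely generated group with finite generating set S_G and Cayley graph Γ, admitting a minimal, non-elliptic action without inversions on a simplicial tree T with all edge stabilisers finitely generated. Fix a base vertex p ∈ T and let f_p : G → T be the orbit map g ↦ gp. Then one can choose a subgraph Γ(𝔢) ⊆ Γ for every edge 𝔢 of T such that: (1) Γ(𝔢) is connected, G_𝔢-invariant and G_𝔢-cocompact; (2) Γ(g𝔢) = gΓ(𝔢) for all g ∈ G and all edges 𝔢; (3) if 𝔥, 𝔥* are the two halfspaces determined by 𝔢, then Γ(𝔢) contains every edge of Γ with one endpoint in f_p^{-1}(𝔥) and the other in f_p^{-1}(𝔥*); (4) for every r ≥ 0, the intersection of the r-neighbourhoods in Γ of f_p^{-1}(𝔥) and f_p^{-1}(𝔥*) is contained in the r-neighbourhood of Γ(𝔢); (5) each edge of Γ lies in Γ(𝔢) for only finitely many edges 𝔢 of T. -/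

import Mathlib

/-!
The subgraph `Γ(𝔢)` is spanned by the smallest connected neighbourhood `edgeVerts` of the set
`crossSet` of endpoints of those edges of `Γ` that join the two sides of `𝔢`.

Up to translation, an edge of `Γ` joins `1` to a generator `s`, and the orbit map sends it to a
pair `p, sp` separated by only finitely many edges of `T` (`finite_separating`, which rests on
edges of a tree being bridges). Hence finitely many edges of `T` are crossed by an edge of `Γ` at
`1` (`finite_baseEdges`), so `crossSet` is `G_𝔢`-cocompact (`crossSet_cocompact`). As `G_𝔢` is
finitely generated, some neighbourhood of `crossSet` is connected (`exists_isConn_thick`). The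
least radius that works is intrinsic, so that `Γ(g𝔢) = gΓ(𝔢)` needs no choice of orbit
representatives.

The intersection of the neighbourhoods of the two sides is controlled since a path from one side
of `𝔢` to the other runs through an edge crossing `𝔢` (`exists_crossSet_close`). For local
finiteness, if `x ∈ Γ(𝔢)` then `𝔢 = c𝔢₀`, where `𝔢₀` is one of the finitely many edges crossed
at `1` and `c` lies in a ball around `x` with radius depending only on `𝔢₀`
(`finite_edges_through`).
-/

open Set Filter Topology
open scoped ENNReal

namespace MorseGoG

/-! ## Metric notions relative to an explicit distance function

Throughout, distances are given by an explicit function `d : X → X → ℝ`, so that the same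
notions apply to metric spaces (`d = dist`), to groups with word metrics, and to subgroups
with their own word metrics. -/

variable {X : Type*}

/-- `γ` is a `C`-quasi-geodesic on the parameter set `I ⊆ ℝ` with respect to `d`:
`C ≥ 1` and `|s−t|/C − C ≤ d (γ s) (γ t) ≤ C|s−t| + C` for all `s, t ∈ I`. -/
def IsQG (d : X → X → ℝ) (C : ℝ) (I : Set ℝ) (γ : ℝ → X) : Prop :=
  1 ≤ C ∧ ∀ s ∈ I, ∀ t ∈ I,
    |s - t| / C - C ≤ d (γ s) (γ t) ∧ d (γ s) (γ t) ≤ C * |s - t| + C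

/-- `x` lies in the (closed) `r`-neighbourhood of `A` with respect to `d`. -/
def InNbhd (d : X → X → ℝ) (A : Set X) (r : ℝ) (x : X) : Prop :=
  ∃ a ∈ A, d x a ≤ r

/-- The set `A` (e.g. the image of a quasi-geodesic) is `N`-Morse with respect to `d`:
every `C`-quasi-geodesic segment with endpoints on `A` is contained in the
`N C`-neighbourhood of `A`. -/
def MorseSet (d : X → X → ℝ) (N : ℝ → ℝ) (A : Set X) : Prop :=
  ∀ C : ℝ, 1 ≤ C → ∀ a b : ℝ, a ≤ b → ∀ α : ℝ → X,
    IsQG d C (Set.Icc a b) α → α a ∈ A → α b ∈ A →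
    ∀ t ∈ Set.Icc a b, InNbhd d A (N C) (α t)

/-- `A` is Morse: it is `N`-Morse for some Morse gauge `N`. -/
def IsMorse (d : X → X → ℝ) (A : Set X) : Prop := ∃ N : ℝ → ℝ, MorseSet d N A

/-- A discrete geodesic ray: the sequence of vertices of a geodesic ray in a graph. -/
def IsGeodSeq (d : X → X → ℝ) (γ : ℕ → X) : Prop :=
  ∀ m n : ℕ, d (γ m) (γ n) = |(m : ℝ) - (n : ℝ)|

/-- A discrete geodesic segment of length `n`. -/
def IsGeodSeg (d : X → X → ℝ) (n : ℕ) (γ : ℕ → X) : Prop :=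
  ∀ i ≤ n, ∀ j ≤ n, d (γ i) (γ j) = |(i : ℝ) - (j : ℝ)|

/-- A discrete `C`-quasi-geodesic ray. -/
def IsQGSeq (d : X → X → ℝ) (C : ℝ) (γ : ℕ → X) : Prop :=
  1 ≤ C ∧ ∀ m n : ℕ,
    |(m : ℝ) - n| / C - C ≤ d (γ m) (γ n) ∧ d (γ m) (γ n) ≤ C * |(m : ℝ) - n| + C

/-- Two sets are at finite Hausdorff distance with respect to `d`. -/
def BddHD (d : X → X → ℝ) (A B : Set X) : Prop :=
  ∃ r : ℝ, (∀ a ∈ A, InNbhd d B r a) ∧ (∀ b ∈ B, InNbhd d A r b)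

/-- A discrete edge path with `n` steps: consecutive points are at distance at most `1`
(i.e. equal or joined by an edge, in a graph whose vertex set carries the metric `d`). -/
def IsEdgePath (d : X → X → ℝ) (n : ℕ) (c : ℕ → X) : Prop :=
  ∀ i < n, d (c i) (c (i + 1)) ≤ 1

/-- Combinatorial divergence of a discrete ray `γ` in a graph with vertex distance `d`:
the infimum, over `s ≥ r` and over edge paths joining `γ (s - r)` to `γ (s + r)` and
avoiding the ball of radius `ε·r` around `γ s`, of the length of the path. -/
noncomputable def gdivergence (d : X → X → ℝ) (γ : ℕ → X) (r : ℕ) (ε : ℝ) : ℝ≥0∞ :=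
  ⨅ (s : ℕ) (_ : r ≤ s) (n : ℕ) (c : ℕ → X) (_ : IsEdgePath d n c)
    (_ : c 0 = γ (s - r)) (_ : c n = γ (s + r))
    (_ : ∀ i ≤ n, ε * r < d (c i) (γ s)), (n : ℝ≥0∞)

/-! ## Geodesic metric spaces, geodesic rays, divergence -/

variable {Y : Type*} [MetricSpace Y]

/-- A geodesic metric space: any two points are joined by an isometrically parametrised path. -/
def IsGeodesicSpace (Y : Type*) [MetricSpace Y] : Prop :=
  ∀ x y : Y, ∃ γ : ℝ → Y, γ 0 = x ∧ γ (dist x y) = y ∧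
    ∀ s ∈ Set.Icc 0 (dist x y), ∀ t ∈ Set.Icc 0 (dist x y), dist (γ s) (γ t) = |s - t|

/-- A geodesic ray (defined on `[0,∞)` and extended constantly to negative times). -/
def IsGeodRay (γ : ℝ → Y) : Prop :=
  (∀ s t : ℝ, 0 ≤ s → 0 ≤ t → dist (γ s) (γ t) = |s - t|) ∧ ∀ t : ℝ, γ t = γ (max t 0)

theorem IsGeodRay.lipschitz {γ : ℝ → Y} (h : IsGeodRay γ) : LipschitzWith 1 γ := by
  apply LipschitzWith.of_dist_le_mul
  intro s t
  rw [h.2 s, h.2 t, h.1 _ _ (le_max_right s 0) (le_max_right t 0)]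
  rw [NNReal.coe_one, one_mul, Real.dist_eq]
  exact abs_max_sub_max_le_abs s t 0

/-- Divergence function `δ_γ(r, ε)` of a quasi-geodesic ray `γ` in a metric space:
the infimum of lengths (total variations) of paths connecting `γ (s - r)` to `γ (s + r)`
outside the closed ball `B(γ s, εr)`, over all `s ≥ r`. -/
noncomputable def divergence (γ : ℝ → Y) (r ε : ℝ) : ℝ≥0∞ :=
  ⨅ (s : ℝ) (_ : r ≤ s) (c : ℝ → Y) (_ : ContinuousOn c (Set.Icc 0 1))
    (_ : c 0 = γ (s - r)) (_ : c 1 = γ (s + r))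
    (_ : ∀ t ∈ Set.Icc (0 : ℝ) 1, ε * r < dist (c t) (γ s)),
    eVariationOn c (Set.Icc 0 1)

/-- Quasi-isometric embedding between sets carrying explicit distance functions. -/
def IsQIEmb {Z W : Type*} (dZ : Z → Z → ℝ) (dW : W → W → ℝ) (f : Z → W) : Prop :=
  ∃ C : ℝ, 1 ≤ C ∧ ∀ z z' : Z,
    dZ z z' / C - C ≤ dW (f z) (f z') ∧ dW (f z) (f z') ≤ C * dZ z z' + C

/-! ## The Morse boundary of a proper geodesic metric space -/

/-- A Morse geodesic ray based at `p` in the metric space `Y`. -/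
structure MRay (Y : Type*) [MetricSpace Y] (p : Y) where
  ray : ℝ → Y
  base : ray 0 = p
  geod : IsGeodRay ray
  morse : IsMorse dist (Set.range ray)

/-- Two rays are identified when they are at finite Hausdorff distance. -/
def mrayRel (p : Y) (x y : MRay Y p) : Prop :=
  BddHD dist (Set.range x.ray) (Set.range y.ray)

/-- The Morse boundary of a metric space, as a set: Morse geodesic rays based at `p`,
modulo finite Hausdorff distance. -/
def MorseBoundarySp (Y : Type*) [MetricSpace Y] (p : Y) : Type _ := Quot (mrayRel p)

/-- The `N`-Morse stratum: `N`-Morse geodesic rays based at `p`. -/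
def NRaysSp (Y : Type*) [MetricSpace Y] (p : Y) (N : ℝ → ℝ) : Type _ :=
  {γ : MRay Y p // MorseSet dist N (Set.range γ.ray)}

/-- Each stratum of rays carries the compact-open topology (as a set of continuous maps). -/
noncomputable instance NRaysSp.instTop (p : Y) (N : ℝ → ℝ) : TopologicalSpace (NRaysSp Y p N) :=
  TopologicalSpace.induced
    (fun γ => (⟨γ.1.ray, γ.1.geod.lipschitz.continuous⟩ : C(ℝ, Y))) inferInstance

/-- The Morse boundary carries the direct limit topology over all Morse gauges:
a set is open iff its intersection with each stratum `∂_M^N Y_p` is open there. -/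
noncomputable instance MorseBoundarySp.instTop (p : Y) :
    TopologicalSpace (MorseBoundarySp Y p) :=
  ⨆ N : ℝ → ℝ,
    TopologicalSpace.coinduced (fun γ : NRaysSp Y p N => Quot.mk (mrayRel p) γ.1) inferInstance

/-- The relative Morse boundary `(∂_M Y, f)` of a quasi-isometric embedding `f : Y → X`:
classes of Morse rays of `Y` whose image under `f` is Morse in `X`.  It is a subset of
`∂_M Y` (and carries the subspace topology). -/
def relBoundarySp {Y X : Type*} [MetricSpace Y] [MetricSpace X] (p : Y) (f : Y → X) :
    Set (MorseBoundarySp Y p) :=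
  {ξ | ∃ γ : MRay Y p, Quot.mk (mrayRel p) γ = ξ ∧ IsMorse dist (f '' Set.range γ.ray)}

/-! ## Word metrics and Morse boundaries of finitely generated groups -/

variable {G : Type*} [Group G]

/-- Word length of `g` with respect to the (symmetrised) alphabet `S`. -/
noncomputable def wordLength (S : Set G) (g : G) : ℕ :=
  sInf {n : ℕ | ∃ l : List G, l.length = n ∧ (∀ x ∈ l, x ∈ S ∨ x⁻¹ ∈ S) ∧ l.prod = g}

/-- Word metric on `G` with respect to `S`; this is the distance between vertices in the
Cayley graph `Cay(G, S)`. -/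
noncomputable def wdist (S : Set G) (g h : G) : ℝ := wordLength S (g⁻¹ * h)

/-- A Morse geodesic ray in the Cayley graph of `(G, S)`, based at the identity,
recorded by its sequence of vertices. -/
structure GRay (G : Type*) [Group G] (S : Set G) where
  seq : ℕ → G
  base : seq 0 = 1
  geod : IsGeodSeq (wdist S) seq
  morse : IsMorse (wdist S) (Set.range seq)

/-- Identification of rays at finite Hausdorff distance. -/
def grayRel (S : Set G) (x y : GRay G S) : Prop :=
  BddHD (wdist S) (Set.range x.seq) (Set.range y.seq)

/-- The Morse boundary `∂_M G` of the group `G` with finite generating set `S`. -/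
def MorseBoundary (G : Type*) [Group G] (S : Set G) : Type _ := Quot (grayRel (G := G) S)

/-- The stratum of `N`-Morse rays. -/
def NGRays (G : Type*) [Group G] (S : Set G) (N : ℝ → ℝ) : Type _ :=
  {γ : GRay G S // MorseSet (wdist S) N (Set.range γ.seq)}

/-- The compact-open topology on a stratum: for rays in a graph (vertex sequences) this is
the topology of pointwise convergence of the vertex sequences, `G` being discrete. -/
noncomputable instance NGRays.instTop (S : Set G) (N : ℝ → ℝ) :
    TopologicalSpace (NGRays G S N) :=
  TopologicalSpace.induced (fun γ => γ.1.seq)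
    (@Pi.topologicalSpace ℕ (fun _ => G) (fun _ => ⊥))

/-- The direct limit topology on the Morse boundary of a group. -/
noncomputable instance MorseBoundary.instTop (S : Set G) :
    TopologicalSpace (MorseBoundary G S) :=
  ⨆ N : ℝ → ℝ,
    TopologicalSpace.coinduced (fun γ : NGRays G S N => Quot.mk (grayRel S) γ.1) inferInstance

/-! ## Subgroups: undistortion, relative Morse boundaries -/

/-- `H` is finitely generated and undistorted in `(G, S)`: it has a finite generating set
whose word metric is bi-Lipschitz equivalent (suitably, quasi-isometric) to the metric
induced from `G`. -/
def FGUndistorted (S : Set G) (H : Subgroup G) : Prop :=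
  ∃ T : Finset H, Subgroup.closure (T : Set H) = ⊤ ∧
    ∃ C : ℝ, 1 ≤ C ∧ ∀ h h' : H,
      wdist (T : Set H) h h' ≤ C * wdist S (h : G) (h' : G) + C ∧
      wdist S (h : G) (h' : G) ≤ C * wdist (T : Set H) h h' + C

/-- The relative Morse boundary of `H` in `G` is empty, `(∂_M H, G) = ∅`:
no Morse geodesic ray of `H` (w.r.t. any finite generating set of `H`) remains Morse in `G`. -/
def RelMorseEmpty (S : Set G) (H : Subgroup G) : Prop :=
  ∀ T : Finset H, Subgroup.closure (T : Set H) = ⊤ →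
    ∀ γ : ℕ → H, IsGeodSeq (wdist (T : Set H)) γ →
      IsMorse (wdist (T : Set H)) (Set.range γ) →
      ¬ IsMorse (wdist S) (Set.range fun n => (γ n : G))

/-- The image of the natural injection `(∂_M H, G) ↪ ∂_M G`: those classes in `∂_M G`
having a representative ray staying at bounded distance from `H`. -/
def relBdryImage (S : Set G) (H : Subgroup G) : Set (MorseBoundary G S) :=
  {ξ | ∃ γ : GRay G S, Quot.mk (grayRel S) γ = ξ ∧
        ∃ r : ℝ, ∀ n : ℕ, ∃ h ∈ H, wdist S (γ.seq n) h ≤ r}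

/-- The relative Morse boundary `(∂_M H, G)` as a subset of `∂_M H` (where `∂_M H` is
formed w.r.t. a generating set `T` of `H`): classes of rays that remain Morse in `G`. -/
def relBdryIn (S : Set G) (H : Subgroup G) (T : Set H) : Set (MorseBoundary H T) :=
  {ξ | ∃ γ : GRay H T, Quot.mk (grayRel T) γ = ξ ∧
        IsMorse (wdist S) (Set.range fun n => (γ.seq n : G))}

/-- Specification of the natural map `∂_M H → ∂_M G` (or of its restriction to the relative
boundary): each class is sent to the class of a ray of `G` at finite Hausdorff distance
from the image of (a representative of) the given class. -/
def InclSpec (S : Set G) (H : Subgroup G) (TH : Set H)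
    (F : MorseBoundary H TH → MorseBoundary G S) : Prop :=
  ∀ γ : GRay H TH, ∀ β : GRay G S,
    Quot.mk (grayRel S) β = F (Quot.mk (grayRel TH) γ) →
    BddHD (wdist S) (Set.range fun n => ((γ.seq n : G))) (Set.range β.seq)

/-! ## Asymptotic cones and relatively wide subgroups -/

/-- Admissible sequences for an asymptotic cone: sequences at bounded rescaled distance
from the basepoints `o`. -/
def conePts (ω : Ultrafilter ℕ) (d : X → X → ℝ) (o : ℕ → X) (s : ℕ → ℝ) : Set (ℕ → X) :=
  {x | ∃ B : ℝ, ∀ᶠ n in (ω : Filter ℕ), d (o n) (x n) ≤ B * s n}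

/-- The pseudo-distance of the asymptotic cone: ultralimit of the rescaled distances. -/
noncomputable def coneDist (ω : Ultrafilter ℕ) (d : X → X → ℝ) (s : ℕ → ℝ)
    (x y : ℕ → X) : ℝ :=
  limUnder (ω : Filter ℕ) (fun n => d (x n) (y n) / s n)

/-- The topology of the asymptotic cone, as a topology on representative sequences:
generated by the open balls of the cone pseudo-distance. -/
noncomputable def coneTop (ω : Ultrafilter ℕ) (d : X → X → ℝ) (o : ℕ → X) (s : ℕ → ℝ) :
    TopologicalSpace (ℕ → X) :=
  TopologicalSpace.generateFrom
    {U | ∃ c ∈ conePts ω d o s, ∃ ε : ℝ, 0 < ε ∧ U = {x | coneDist ω d s c x < ε}}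

/-- `z` is a cut point of the asymptotic cone separating the points `x` and `y`:
`x, y` differ from `z` and do not lie in a common connected subset of the complement
of (the point represented by) `z`. -/
def ConeSeparates (ω : Ultrafilter ℕ) (d : X → X → ℝ) (o : ℕ → X) (s : ℕ → ℝ)
    (x y z : ℕ → X) : Prop :=
  coneDist ω d s x z ≠ 0 ∧ coneDist ω d s y z ≠ 0 ∧
  ¬ ∃ A : Set (ℕ → X),
      A ⊆ {w ∈ conePts ω d o s | coneDist ω d s w z ≠ 0} ∧ x ∈ A ∧ y ∈ A ∧
      @IsPreconnected (ℕ → X) (coneTop ω d o s) A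

/-- `H` is relatively wide in `(G, S)`: in every asymptotic cone of `G` (over a
non-principal ultrafilter, arbitrary basepoints and scaling factors tending to infinity),
no two limit points of `H` are separated by a cut point. -/
def RelativelyWide (S : Set G) (H : Subgroup G) : Prop :=
  ∀ ω : Ultrafilter ℕ, (ω : Filter ℕ) ≤ Filter.cofinite →
  ∀ (o : ℕ → G) (s : ℕ → ℝ), (∀ n, 0 < s n) → Tendsto s atTop atTop →
  ∀ x y z : ℕ → G, (∀ n, x n ∈ H) → (∀ n, y n ∈ H) →
    x ∈ conePts ω (wdist S) o s → y ∈ conePts ω (wdist S) o s →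
    z ∈ conePts ω (wdist S) o s →
    ¬ ConeSeparates ω (wdist S) o s x y z

/-- The subgroup `H ≤ V` is relatively wide in `V` (for any, equivalently some, finite
generating set of `V`). -/
def RelWideIn (V H : Subgroup G) : Prop :=
  ∀ SV : Finset V, Subgroup.closure (SV : Set V) = ⊤ →
    RelativelyWide (SV : Set V) (H.subgroupOf V)

/-! ## Actions on simplicial trees -/

variable {VT : Type*}

/-- `G` splits as a graph of groups: it acts on the simplicial tree `T`
(preserving adjacency), minimally, non-elliptically and without inversions. -/
def ActsOnTree (G : Type*) [Group G] {VT : Type*} (T : SimpleGraph VT) [MulAction G VT] :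
    Prop :=
  T.IsTree ∧
  (∀ (g : G) (a b : VT), T.Adj a b → T.Adj (g • a) (g • b)) ∧
  (∀ (g : G) (a b : VT), T.Adj a b → ¬(g • a = b ∧ g • b = a)) ∧
  (¬ ∃ v : VT, ∀ g : G, g • v = v) ∧
  (∀ W : Set VT, W.Nonempty → (∀ (g : G), ∀ v ∈ W, g • v ∈ W) →
    (∀ a ∈ W, ∀ b ∈ W, ∀ c : VT, T.dist a c + T.dist c b = T.dist a b → c ∈ W) →
    W = Set.univ)

/-- The stabiliser of the edge `{a, b}` (pointwise; for actions without inversions this is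
the full edge stabiliser). -/
def edgeStab (G : Type*) [Group G] {VT : Type*} [MulAction G VT] (a b : VT) : Subgroup G :=
  MulAction.stabilizer G a ⊓ MulAction.stabilizer G b

/-- The halfspace determined by the edge `{a, b}` containing `b`: one of the two connected
components of the complement of the open edge. -/
def halfspace {VT : Type*} (T : SimpleGraph VT) (a b : VT) : Set VT :=
  {v | T.dist v b < T.dist v a}

end MorseGoG

namespace MorseGoG

variable {G : Type*} [Group G] {VT : Type*}

/-- A choice of "edge subgraphs" `Γ(𝔢) ⊆ Γ` of the Cayley graph `Γ = Cay(G, S)`, one for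
each (unoriented) edge of the tree `T`, recorded by its vertex set `A a b ⊆ G`,
satisfying the properties of Lemma 3.2 (`AIS lem`).  Here `p` is the fixed base vertex of
`T` and `f_p(g) = g • p` is the orbit map. -/
structure EdgeSubgraphs (G : Type*) [Group G] (S : Set G) {VT : Type*} (T : SimpleGraph VT)
    [MulAction G VT] (p : VT) where
  /-- the vertex set of `Γ(𝔢)` for the edge `𝔢 = {a, b}` -/
  A : VT → VT → Set G
  /-- `Γ(𝔢)` only depends on the unoriented edge -/
  symm : ∀ a b : VT, A a b = A b a
  /-- (1) `Γ(𝔢)` is connected -/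
  conn : ∀ a b : VT, T.Adj a b → ∀ x ∈ A a b, ∀ y ∈ A a b,
    ∃ (n : ℕ) (c : ℕ → G), IsEdgePath (wdist S) n c ∧ c 0 = x ∧ c n = y ∧
      ∀ i ≤ n, c i ∈ A a b
  /-- (1) `Γ(𝔢)` is `G_𝔢`-invariant -/
  inva : ∀ a b : VT, T.Adj a b → ∀ g ∈ edgeStab G a b, ∀ x ∈ A a b, g * x ∈ A a b
  /-- (1) `Γ(𝔢)` is `G_𝔢`-cocompact -/
  cocpt : ∀ a b : VT, T.Adj a b →
    ∃ F : Finset G, ∀ x ∈ A a b, ∃ g ∈ edgeStab G a b, ∃ f ∈ F, x = g * f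
  /-- (2) equivariance: `Γ(g𝔢) = gΓ(𝔢)` -/
  equivariant : ∀ (g : G) (a b : VT), A (g • a) (g • b) = (fun x => g * x) '' A a b
  /-- (3) `Γ(𝔢)` contains every edge of `Γ` with one endpoint in `f_p⁻¹(𝔥)` and the other
  in `f_p⁻¹(𝔥*)` -/
  crossing : ∀ a b : VT, T.Adj a b → ∀ x y : G, wdist S x y = 1 →
    x • p ∈ halfspace T a b → y • p ∈ halfspace T b a → x ∈ A a b ∧ y ∈ A a b
  /-- (4) `N(f_p⁻¹(𝔥), r) ∩ N(f_p⁻¹(𝔥*), r) ⊆ N(Γ(𝔢), r)` -/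
  nbhd : ∀ a b : VT, T.Adj a b → ∀ r : ℝ, 0 ≤ r → ∀ x : G,
    (∃ y : G, y • p ∈ halfspace T a b ∧ wdist S x y ≤ r) →
    (∃ y : G, y • p ∈ halfspace T b a ∧ wdist S x y ≤ r) →
    ∃ z ∈ A a b, wdist S x z ≤ r
  /-- (5) each edge of `Γ` lies in `Γ(𝔢)` for only finitely many edges `𝔢` of `T` -/
  finmany : ∀ x y : G, wdist S x y = 1 →
    {e : VT × VT | T.Adj e.1 e.2 ∧ x ∈ A e.1 e.2 ∧ y ∈ A e.1 e.2}.Finite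

/-- The vertex set of `Γ(𝔥)` for the halfspace `𝔥` of the edge `{a,b}` containing `b`:
`f_p⁻¹(𝔥) ∖ Γ(𝔢)`. -/
def hsVerts (T : SimpleGraph VT) [MulAction G VT] (p : VT)
    (A : VT → VT → Set G) (a b : VT) : Set G :=
  {g : G | g • p ∈ halfspace T a b ∧ g ∉ A a b}

/-- `M(𝔥) ⊆ ∂_M G`: classes of rays eventually contained in `Γ(𝔥)`, for the halfspace `𝔥`
of the edge `{a,b}` containing `b`. -/
def Mset (S : Set G) (T : SimpleGraph VT) [MulAction G VT] (p : VT)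
    (A : VT → VT → Set G) (a b : VT) : Set (MorseBoundary G S) :=
  {ξ | ∃ γ : GRay G S, Quot.mk (grayRel S) γ = ξ ∧
        ∃ n₀ : ℕ, ∀ n ≥ n₀, γ.seq n ∈ hsVerts T p A a b}

end MorseGoG

namespace MorseGoG

/-! ### Word length -/

section Word

variable {G : Type*} [Group G] {S : Set G}

lemma exists_word (hS : Subgroup.closure S = ⊤) (g : G) :
    ∃ l : List G, l.length = wordLength S g ∧ (∀ x ∈ l, x ∈ S ∨ x⁻¹ ∈ S) ∧ l.prod = g := by
  have hg : g ∈ (Subgroup.closure S).toSubmonoid := by rw [hS]; trivial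
  rw [Subgroup.closure_toSubmonoid] at hg
  obtain ⟨l, hl, hp⟩ := Submonoid.exists_list_of_mem_closure hg
  exact Nat.sInf_mem
    (s := {n : ℕ | ∃ l : List G, l.length = n ∧ (∀ x ∈ l, x ∈ S ∨ x⁻¹ ∈ S) ∧ l.prod = g})
    ⟨l.length, l, rfl, hl, hp⟩

lemma wordLength_prod_le (l : List G) (hl : ∀ x ∈ l, x ∈ S ∨ x⁻¹ ∈ S) :
    wordLength S l.prod ≤ l.length :=
  Nat.sInf_le ⟨l, rfl, hl, rfl⟩

lemma wordLength_one : wordLength S (1 : G) = 0 := by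
  simpa using wordLength_prod_le (S := S) ([] : List G) (by simp)

lemma wordLength_inv_le (hS : Subgroup.closure S = ⊤) (g : G) :
    wordLength S g⁻¹ ≤ wordLength S g := by
  obtain ⟨l, hlen, hl, hp⟩ := exists_word hS g
  rw [← hlen, ← hp, List.prod_inv_reverse]
  refine (wordLength_prod_le _ ?_).trans (by simp)
  intro x hx
  simp only [List.mem_reverse, List.mem_map] at hx
  obtain ⟨y, hy, rfl⟩ := hx
  simpa using (hl y hy).symm

lemma wordLength_inv (hS : Subgroup.closure S = ⊤) (g : G) :
    wordLength S g⁻¹ = wordLength S g :=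
  le_antisymm (wordLength_inv_le hS g) (by simpa using wordLength_inv_le hS g⁻¹)

lemma eq_one_of_wordLength_eq_zero (hS : Subgroup.closure S = ⊤) {g : G}
    (h : wordLength S g = 0) : g = 1 := by
  obtain ⟨l, hlen, -, hp⟩ := exists_word hS g
  rw [h, List.length_eq_zero_iff] at hlen
  simpa [hlen] using hp.symm

/-- Balls of the word metric of a finite generating set are finite. -/
lemma finite_ball (hfin : S.Finite) (hS : Subgroup.closure S = ⊤) (n : ℕ) :
    {g : G | wordLength S g ≤ n}.Finite := by
  have key : ∀ k : ℕ,
      {g : G | ∃ l : List G, l.length = k ∧ (∀ x ∈ l, x ∈ S ∨ x⁻¹ ∈ S) ∧ l.prod = g}.Finite := by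
    intro k
    induction k with
    | zero =>
      refine (Set.finite_singleton (1 : G)).subset ?_
      rintro g ⟨l, hl, -, rfl⟩
      rw [List.length_eq_zero_iff] at hl
      simp [hl]
    | succ k ih =>
      refine (Set.Finite.image2 (fun x y : G => x * y) (hfin.union hfin.inv) ih).subset ?_
      rintro g ⟨l, hlen, hl, rfl⟩
      match l, hlen, hl with
      | x :: t, hlen, hl =>
        refine ⟨x, ?_, t.prod, ⟨t, by simpa using hlen, fun y hy => hl y (by simp [hy]), rfl⟩,
          by simp⟩
        simpa using hl x (by simp)
  refine ((Set.finite_Iic n).biUnion fun k _ => key k).subset ?_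
  intro g hg
  simp only [Set.mem_iUnion]
  exact ⟨_, hg, exists_word hS g⟩

/-- A geodesic word for `x⁻¹ * y` traces a path in the Cayley graph from `x` to `y`, whose
`i`-th vertex is at distance at most `i` from `x`. -/
lemma exists_path (hS : Subgroup.closure S = ⊤) (x y : G) :
    ∃ c : ℕ → G, c 0 = x ∧ c (wordLength S (x⁻¹ * y)) = y ∧
      (∀ i, wordLength S ((c i)⁻¹ * c (i + 1)) ≤ 1) ∧ ∀ i, wordLength S (x⁻¹ * c i) ≤ i := by
  obtain ⟨l, hlen, hl, hp⟩ := exists_word hS (x⁻¹ * y)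
  refine ⟨fun i => x * (l.take i).prod, by simp, by simp [← hlen, hp], fun i => ?_, fun i => ?_⟩
  · have h : (x * (l.take i).prod)⁻¹ * (x * (l.take (i + 1)).prod) = (l[i]?.toList).prod := by
      rw [List.take_add_one, List.prod_append]; group
    simp only [h]
    refine (wordLength_prod_le _ ?_).trans ?_
    · intro z hz
      rw [Option.mem_toList] at hz
      exact hl z (List.mem_of_getElem? hz)
    · cases l[i]? <;> simp
  · simp only [inv_mul_cancel_left]
    refine (wordLength_prod_le _ fun z hz => hl z (List.mem_of_mem_take hz)).trans ?_
    simp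

end Word

/-! ### Connected thickenings of subsets of the Cayley graph -/

section Thickening

variable {G : Type*} [Group G]

/-- Adjacency (or equality) of two vertices of the Cayley graph that both lie in `B`. -/
def Step (S B : Set G) (u v : G) : Prop :=
  u ∈ B ∧ v ∈ B ∧ wordLength S (u⁻¹ * v) ≤ 1

/-- The full subgraph of the Cayley graph spanned by `B` is connected (or empty). -/
def IsConn (S B : Set G) : Prop :=
  ∀ x ∈ B, ∀ y ∈ B, Relation.ReflTransGen (Step S B) x y

/-- The closed `n`-neighbourhood of `C` in the Cayley graph. -/
def thick (S C : Set G) (n : ℕ) : Set G :=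
  {x | ∃ c ∈ C, wordLength S (c⁻¹ * x) ≤ n}

/-- The least radius at which the neighbourhood of `C` is connected (`0` if there is none).
Being intrinsic to `C`, it is invariant under translation. -/
noncomputable def connRadius (S C : Set G) : ℕ :=
  sInf {n | IsConn S (thick S C n)}

variable {S : Set G}

lemma Step.symm (hS : Subgroup.closure S = ⊤) {B : Set G} {u v : G} (h : Step S B u v) :
    Step S B v u := by
  refine ⟨h.2.1, h.1, ?_⟩
  have := wordLength_inv_le hS (u⁻¹ * v)
  rw [mul_inv_rev, inv_inv] at this
  exact this.trans h.2.2

lemma joined_symm (hS : Subgroup.closure S = ⊤) {B : Set G} {u v : G}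
    (h : Relation.ReflTransGen (Step S B) u v) : Relation.ReflTransGen (Step S B) v u := by
  induction h with
  | refl => exact .refl
  | tail _ h2 ih => exact .head (h2.symm hS) ih

lemma joined_translate {B B' : Set G} (g : G) (hg : ∀ x ∈ B, g * x ∈ B') {u v : G}
    (h : Relation.ReflTransGen (Step S B) u v) :
    Relation.ReflTransGen (Step S B') (g * u) (g * v) := by
  refine Relation.ReflTransGen.lift (fun x => g * x) ?_ _ _ h
  rintro a b ⟨ha, hb, hab⟩
  exact ⟨hg a ha, hg b hb, by simpa [mul_assoc] using hab⟩

lemma IsConn.translate {B : Set G} (g : G) (h : IsConn S B) :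
    IsConn S ((fun x => g * x) '' B) := by
  rintro _ ⟨x, hx, rfl⟩ _ ⟨y, hy, rfl⟩
  exact joined_translate g (fun z hz => Set.mem_image_of_mem _ hz) (h x hx y hy)

lemma isConn_translate_iff {B : Set G} (g : G) :
    IsConn S ((fun x => g * x) '' B) ↔ IsConn S B := by
  refine ⟨fun h => ?_, fun h => h.translate g⟩
  have h' := h.translate g⁻¹
  rw [Set.image_image] at h'
  simpa only [inv_mul_cancel_left, Set.image_id'] using h'

lemma thick_translate (C : Set G) (n : ℕ) (g : G) :
    thick S ((fun x => g * x) '' C) n = (fun x => g * x) '' thick S C n := by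
  ext x
  constructor
  · rintro ⟨_, ⟨c, hc, rfl⟩, h⟩
    exact ⟨g⁻¹ * x, ⟨c, hc, by simpa [mul_assoc] using h⟩, by simp⟩
  · rintro ⟨x, ⟨c, hc, h⟩, rfl⟩
    exact ⟨g * c, ⟨c, hc, rfl⟩, by simpa [mul_assoc] using h⟩

lemma connRadius_translate (C : Set G) (g : G) :
    connRadius S ((fun x => g * x) '' C) = connRadius S C := by
  simp only [connRadius, thick_translate, isConn_translate_iff]

lemma subset_thick (C : Set G) (n : ℕ) : C ⊆ thick S C n :=
  fun x hx => ⟨x, hx, by simp [wordLength_one]⟩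

lemma joined_of_close (hS : Subgroup.closure S = ⊤) {C : Set G} {n : ℕ} {c x : G} (hc : c ∈ C)
    (h : wordLength S (c⁻¹ * x) ≤ n) : Relation.ReflTransGen (Step S (thick S C n)) c x := by
  obtain ⟨γ, h0, h1, hstep, hd⟩ := exists_path hS c x
  have key : ∀ i ≤ n, Relation.ReflTransGen (Step S (thick S C n)) c (γ i) := by
    intro i
    induction i with
    | zero => intro _; rw [h0]
    | succ i ih =>
      intro hi
      exact (ih (by omega)).tail
        ⟨⟨c, hc, (hd i).trans (by omega)⟩, ⟨c, hc, (hd (i + 1)).trans hi⟩, hstep i⟩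
  simpa [h1] using key _ h

/-- A set on which a finitely generated group `H` acts cocompactly has a connected
neighbourhood: the radius only has to exceed the distances between the finitely many points
`f` and `u * f'`, where `f, f'` are orbit representatives and `u` is trivial or a generator of
`H`. -/
lemma exists_isConn_thick (hS : Subgroup.closure S = ⊤) {H : Subgroup G} (hH : H.FG) {C : Set G}
    (hinv : ∀ h ∈ H, ∀ x ∈ C, h * x ∈ C) {F : Set G} (hF : F.Finite)
    (hC : ∀ x ∈ C, ∃ h ∈ H, ∃ f ∈ F, x = h * f) :
    ∃ n, IsConn S (thick S C n) := by
  classical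
  obtain ⟨U, hU⟩ := hH
  have hfin : (Set.image2 (fun f v : G => f⁻¹ * v) F
      (Set.image2 (fun u f : G => u * f) (insert 1 (U : Set G)) F)).Finite :=
    hF.image2 _ ((U.finite_toSet.insert 1).image2 _ hF)
  obtain ⟨n, hn⟩ := (hfin.image (wordLength S)).bddAbove
  have hbound : ∀ f ∈ F, ∀ u ∈ insert 1 (U : Set G), ∀ f' ∈ F,
      wordLength S (f⁻¹ * (u * f')) ≤ n := fun f hf u hu f' hf' =>
    hn ⟨_, ⟨f, hf, _, ⟨u, hu, f', hf', rfl⟩, rfl⟩, rfl⟩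
  refine ⟨n, ?_⟩
  have hinv' : ∀ h ∈ H, ∀ x ∈ thick S C n, h * x ∈ thick S C n := by
    rintro h hh x ⟨c, hc, hx⟩
    exact ⟨h * c, hinv h hh c hc, by simpa [mul_assoc] using hx⟩
  have horb : ∀ h ∈ H, ∀ f ∈ F, f ∈ C →
      Relation.ReflTransGen (Step S (thick S C n)) f (h * f) := by
    intro h hh f hf hfC
    rw [← hU] at hh
    induction hh using Subgroup.closure_induction with
    | mem u hu => exact joined_of_close hS hfC (hbound f hf u (by simp [hu]) f hf)
    | one => simpa using Relation.ReflTransGen.refl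
    | mul x y hx hy ihx ihy =>
      rw [mul_assoc]
      exact ihx.trans (joined_translate x (hinv' x (hU ▸ hx)) ihy)
    | inv x hx ih =>
      have := joined_translate x⁻¹ (hinv' x⁻¹ (inv_mem (hU ▸ hx))) ih
      exact joined_symm hS (by simpa using this)
  have hrep : ∀ x ∈ thick S C n, ∃ f ∈ F, f ∈ C ∧
      Relation.ReflTransGen (Step S (thick S C n)) f x := by
    rintro x ⟨c, hc, hx⟩
    obtain ⟨h, hh, f, hf, rfl⟩ := hC c hc
    have hfC : f ∈ C := by simpa using hinv h⁻¹ (inv_mem hh) _ hc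
    exact ⟨f, hf, hfC, (horb h hh f hf hfC).trans (joined_of_close hS hc hx)⟩
  intro x hx y hy
  obtain ⟨f, hf, hfC, hfx⟩ := hrep x hx
  obtain ⟨f', hf', -, hfy⟩ := hrep y hy
  have hff : Relation.ReflTransGen (Step S (thick S C n)) f f' :=
    joined_of_close hS hfC (by simpa using hbound f hf 1 (by simp) f' hf')
  exact (joined_symm hS hfx).trans (hff.trans hfy)

lemma isConn_thick_connRadius {C : Set G} (h : ∃ n, IsConn S (thick S C n)) :
    IsConn S (thick S C (connRadius S C)) :=
  Nat.sInf_mem (s := {n | IsConn S (thick S C n)}) h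

lemma exists_edgePath_of_joined {B : Set G} {x y : G} (hx : x ∈ B)
    (h : Relation.ReflTransGen (Step S B) x y) :
    ∃ (n : ℕ) (c : ℕ → G), IsEdgePath (wdist S) n c ∧ c 0 = x ∧ c n = y ∧
      ∀ i ≤ n, c i ∈ B := by
  induction h with
  | refl => exact ⟨0, fun _ => x, by simp [IsEdgePath], rfl, rfl, fun _ _ => hx⟩
  | @tail y z _ hyz ih =>
    obtain ⟨n, c, hc, h0, hn, hB⟩ := ih
    refine ⟨n + 1, fun i => if i ≤ n then c i else z, ?_, by simp [h0], by simp, ?_⟩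
    · intro i hi
      rcases Nat.lt_or_ge i n with h | h
      · simpa [h.le, Nat.succ_le_of_lt h] using hc i h
      · obtain rfl : i = n := by omega
        simpa [hn, wdist] using hyz.2.2
    · intro i hi
      by_cases h : i ≤ n
      · simpa [h] using hB i h
      · simpa [h] using hyz.2.1

end Thickening

/-! ### Halfspaces of a tree -/

section Tree

variable {VT : Type*} {T : SimpleGraph VT}

lemma halfspace_or (hT : T.IsTree) {a b : VT} (hab : T.Adj a b) (v : VT) :
    v ∈ halfspace T a b ∨ v ∈ halfspace T b a :=
  (lt_or_gt_of_ne (hT.dist_ne_of_adj v hab)).symm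

lemma not_mem_halfspace_swap {a b v : VT} (h : v ∈ halfspace T a b) : v ∉ halfspace T b a :=
  lt_asymm (a := T.dist v b) h

lemma notMem_edges_of_mem_halfspace {a b x : VT} (hx : x ∈ halfspace T a b) (w : T.Walk b x)
    (hw : w.length = T.dist b x) : s(b, a) ∉ w.edges := by
  classical
  intro h
  have ha := w.snd_mem_support_of_mem_edges h
  have h1 := SimpleGraph.dist_le (w.dropUntil a ha)
  have h2 := w.length_dropUntil_le_length ha
  have h3 : T.dist x b < T.dist x a := hx
  rw [T.dist_comm (u := x) (v := b), T.dist_comm (u := x) (v := a)] at h3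
  omega

/-- The only edge joining the two halfspaces of `{a, b}` is `{a, b}`, because every edge of a
tree is a bridge. -/
lemma eq_of_adj_of_mem_halfspace (hT : T.IsTree) {a b x y : VT} (hab : T.Adj a b)
    (hxy : T.Adj x y) (hx : x ∈ halfspace T a b) (hy : y ∈ halfspace T b a) :
    x = b ∧ y = a := by
  obtain ⟨w, hw⟩ := hT.connected.exists_walk_length_eq_dist b x
  obtain ⟨w', hw'⟩ := hT.connected.exists_walk_length_eq_dist a y
  have hbr := SimpleGraph.isBridge_iff_forall_walk_mem_edges.1
    (SimpleGraph.isAcyclic_iff_forall_adj_isBridge.1 hT.isAcyclic hab.symm)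
    (w.append (SimpleGraph.Walk.cons hxy w'.reverse))
  have h1 := notMem_edges_of_mem_halfspace hx w hw
  have h2 := notMem_edges_of_mem_halfspace hy w' hw'
  rw [Sym2.eq_swap] at h2
  simp only [SimpleGraph.Walk.edges_append, SimpleGraph.Walk.edges_cons,
    SimpleGraph.Walk.edges_reverse, List.mem_append, List.mem_cons, List.mem_reverse, h1, h2,
    false_or, or_false, Sym2.eq_iff] at hbr
  rcases hbr with ⟨rfl, rfl⟩ | ⟨rfl, rfl⟩
  · exact ⟨rfl, rfl⟩
  · simp [halfspace] at hx

/-- Only finitely many edges of a tree separate two given vertices. -/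
lemma finite_separating (hT : T.IsTree) (u v : VT) :
    {e : VT × VT | T.Adj e.1 e.2 ∧ u ∈ halfspace T e.1 e.2 ∧ v ∈ halfspace T e.2 e.1}.Finite := by
  obtain ⟨w⟩ := hT.connected.preconnected u v
  induction w with
  | nil =>
    refine Set.finite_empty.subset ?_
    rintro e ⟨-, h1, h2⟩
    exact not_mem_halfspace_swap h1 h2
  | @cons u w v huw q ih =>
    refine (ih.insert (w, u)).subset ?_
    rintro ⟨a, b⟩ ⟨hab, h1, h2⟩
    rcases halfspace_or hT hab w with h | h
    · exact Or.inr ⟨hab, h, h2⟩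
    · obtain ⟨rfl, rfl⟩ := eq_of_adj_of_mem_halfspace hT hab huw h1 h
      exact Or.inl rfl

variable {G : Type*} [Group G] [MulAction G VT]

lemma dist_smul (hT : T.IsTree) (hadj : ∀ (g : G) (a b : VT), T.Adj a b → T.Adj (g • a) (g • b))
    (g : G) (a b : VT) : T.dist (g • a) (g • b) = T.dist a b := by
  have key : ∀ (g : G) (a b : VT), T.dist (g • a) (g • b) ≤ T.dist a b := by
    intro g a b
    obtain ⟨w, hw⟩ := hT.connected.exists_walk_length_eq_dist a b
    let φ : T →g T := ⟨fun v => g • v, fun {a b} h => hadj g a b h⟩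
    rw [← hw, ← SimpleGraph.Walk.length_map φ w]
    exact SimpleGraph.dist_le (w.map φ)
  exact le_antisymm (key g a b) (by simpa using key g⁻¹ (g • a) (g • b))

lemma smul_mem_halfspace_iff (hT : T.IsTree)
    (hadj : ∀ (g : G) (a b : VT), T.Adj a b → T.Adj (g • a) (g • b)) (g : G) (a b v : VT) :
    g • v ∈ halfspace T (g • a) (g • b) ↔ v ∈ halfspace T a b := by
  simp only [halfspace, Set.mem_ofPred_eq, dist_smul hT hadj]

end Tree

/-! ### The vertices incident to a crossing edge -/

section Crossing

variable {G VT : Type*} [Group G] [MulAction G VT]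

/-- The endpoints of the edges of the Cayley graph that join the preimages of the two halfspaces
of `{a, b}` under the orbit map of `p`. -/
def crossSet (S : Set G) (T : SimpleGraph VT) (p a b : VT) : Set G :=
  {x | ∃ y, wdist S x y = 1 ∧ ((x • p ∈ halfspace T a b ∧ y • p ∈ halfspace T b a) ∨
    (x • p ∈ halfspace T b a ∧ y • p ∈ halfspace T a b))}

variable {S : Set G} {T : SimpleGraph VT} {p : VT}

lemma crossSet_symm (a b : VT) : crossSet S T p a b = crossSet S T p b a := by
  ext x
  simp only [crossSet, Set.mem_ofPred_eq, or_comm]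

lemma mul_mem_crossSet (hT : T.IsTree)
    (hadj : ∀ (g : G) (a b : VT), T.Adj a b → T.Adj (g • a) (g • b)) (g : G) {a b : VT} {x : G}
    (hx : x ∈ crossSet S T p a b) : g * x ∈ crossSet S T p (g • a) (g • b) := by
  obtain ⟨y, hxy, h⟩ := hx
  refine ⟨g * y, ?_, ?_⟩
  · simpa [wdist, mul_assoc] using hxy
  · simpa only [mul_smul, smul_mem_halfspace_iff hT hadj] using h

lemma crossSet_smul (hT : T.IsTree)
    (hadj : ∀ (g : G) (a b : VT), T.Adj a b → T.Adj (g • a) (g • b)) (g : G) (a b : VT) :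
    crossSet S T p (g • a) (g • b) = (fun x => g * x) '' crossSet S T p a b := by
  ext x
  constructor
  · intro hx
    exact ⟨g⁻¹ * x, by simpa using mul_mem_crossSet hT hadj g⁻¹ hx, by simp⟩
  · rintro ⟨y, hy, rfl⟩
    exact mul_mem_crossSet hT hadj g hy

/-- The edges of the tree crossed by an edge of the Cayley graph at `1`. -/
def baseEdges (S : Set G) (T : SimpleGraph VT) (p : VT) : Set (VT × VT) :=
  {e | T.Adj e.1 e.2 ∧ (1 : G) ∈ crossSet S T p e.1 e.2}

/-- Each of the finitely many generators moves `p` across finitely many edges. -/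
lemma finite_baseEdges (hfin : S.Finite) (hS : Subgroup.closure S = ⊤) (hT : T.IsTree) :
    (baseEdges S T p).Finite := by
  refine ((finite_ball hfin hS 1).biUnion fun y _ =>
    (finite_separating hT p (y • p)).union (finite_separating hT (y • p) p)).subset ?_
  rintro ⟨a, b⟩ ⟨hab, y, hy, h⟩
  simp only [Set.mem_iUnion]
  refine ⟨y, ?_, ?_⟩
  · have : wordLength S (1⁻¹ * y) = 1 := by
      rw [wdist] at hy
      exact_mod_cast hy
    simpa using this.le
  · simp only [one_smul] at h
    rcases h with h | h
    · exact Or.inl ⟨hab, h⟩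
    · exact Or.inr ⟨hab, h.2, h.1⟩

lemma inv_smul_mem_baseEdges (hT : T.IsTree)
    (hadj : ∀ (g : G) (a b : VT), T.Adj a b → T.Adj (g • a) (g • b)) {a b : VT}
    (hab : T.Adj a b) {c : G} (hc : c ∈ crossSet S T p a b) :
    (c⁻¹ • a, c⁻¹ • b) ∈ baseEdges S T p :=
  ⟨hadj _ _ _ hab, by simpa using mul_mem_crossSet hT hadj c⁻¹ hc⟩

/-- The crossing vertices of an edge form finitely many orbits of its stabiliser: the
translates `c⁻¹𝔢` lie in the finite set `baseEdges`, and `c, d` lie in the same `G_𝔢`-orbit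
when `c⁻¹𝔢 = d⁻¹𝔢`. -/
lemma crossSet_cocompact (hfin : S.Finite) (hS : Subgroup.closure S = ⊤) (hT : T.IsTree)
    (hadj : ∀ (g : G) (a b : VT), T.Adj a b → T.Adj (g • a) (g • b)) {a b : VT}
    (hab : T.Adj a b) :
    ∃ F : Set G, F.Finite ∧ ∀ x ∈ crossSet S T p a b, ∃ h ∈ edgeStab G a b, ∃ f ∈ F,
      x = h * f := by
  classical
  let ρ : VT × VT → G := fun e =>
    if h : ∃ g : G, (g⁻¹ • a, g⁻¹ • b) = e then h.choose else 1
  refine ⟨ρ '' baseEdges S T p, (finite_baseEdges hfin hS hT).image ρ, ?_⟩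
  intro x hx
  have hex : ∃ g : G, (g⁻¹ • a, g⁻¹ • b) = (x⁻¹ • a, x⁻¹ • b) := ⟨x, rfl⟩
  set f := ρ (x⁻¹ • a, x⁻¹ • b) with hf
  have hspec : (f⁻¹ • a, f⁻¹ • b) = (x⁻¹ • a, x⁻¹ • b) := by
    simp only [hf, ρ, dif_pos hex]
    exact hex.choose_spec
  obtain ⟨h1, h2⟩ := Prod.mk.inj hspec
  refine ⟨x * f⁻¹, ?_, f, ⟨_, inv_smul_mem_baseEdges hT hadj hab hx, rfl⟩, by group⟩
  constructor
  · change (x * f⁻¹) • a = a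
    rw [mul_smul, h1, smul_inv_smul]
  · change (x * f⁻¹) • b = b
    rw [mul_smul, h2, smul_inv_smul]

/-- A geodesic of the Cayley graph between the two sides of an edge contains a crossing edge,
whose first endpoint is at least as close to `x` as `y` is. -/
lemma exists_crossSet_close (hS : Subgroup.closure S = ⊤) (hT : T.IsTree) {a b : VT}
    (hab : T.Adj a b) {x y : G} (hx : x • p ∈ halfspace T a b) (hy : y • p ∈ halfspace T b a) :
    ∃ z ∈ crossSet S T p a b, wdist S x z ≤ wdist S x y := by
  obtain ⟨c, h0, h1, hstep, hd⟩ := exists_path hS x y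
  set n := wordLength S (x⁻¹ * y) with hn
  obtain ⟨i, hi, hci, hci'⟩ : ∃ i < n, c i • p ∈ halfspace T a b ∧
      c (i + 1) • p ∈ halfspace T b a := by
    by_contra! hcon
    have : ∀ i ≤ n, c i • p ∈ halfspace T a b := by
      intro i
      induction i with
      | zero => intro _; rwa [h0]
      | succ i ih =>
        intro hi
        exact (halfspace_or hT hab _).resolve_right (hcon i hi (ih (by omega)))
    have hend := this n le_rfl
    rw [h1] at hend
    exact not_mem_halfspace_swap hend hy
  refine ⟨c i, ⟨c (i + 1), ?_, Or.inl ⟨hci, hci'⟩⟩, ?_⟩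
  · have hne : wordLength S ((c i)⁻¹ * c (i + 1)) ≠ 0 := by
      intro h
      have := inv_mul_eq_one.1 (eq_one_of_wordLength_eq_zero hS h)
      rw [← this] at hci'
      exact not_mem_halfspace_swap hci hci'
    have : wordLength S ((c i)⁻¹ * c (i + 1)) = 1 := by have := hstep i; omega
    simp [wdist, this]
  · have : wordLength S (x⁻¹ * c i) ≤ n := (hd i).trans hi.le
    simpa [wdist] using this

/-- The vertex set of `Γ(𝔢)` for `𝔢 = {a, b}`: the smallest connected neighbourhood of the
set of endpoints of the crossing edges. -/
noncomputable def edgeVerts (S : Set G) (T : SimpleGraph VT) (p a b : VT) : Set G :=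
  thick S (crossSet S T p a b) (connRadius S (crossSet S T p a b))

lemma edgeVerts_smul (hT : T.IsTree)
    (hadj : ∀ (g : G) (a b : VT), T.Adj a b → T.Adj (g • a) (g • b)) (g : G) (a b : VT) :
    edgeVerts S T p (g • a) (g • b) = (fun x => g * x) '' edgeVerts S T p a b := by
  simp only [edgeVerts, crossSet_smul hT hadj, connRadius_translate, thick_translate]

lemma crossSet_subset_edgeVerts (a b : VT) : crossSet S T p a b ⊆ edgeVerts S T p a b :=
  subset_thick _ _

/-- A vertex `x` lies in `Γ(𝔢)` for finitely many `𝔢`: such an edge is `c𝔢₀` with `𝔢₀` in the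
finite set `baseEdges` and `c` in the ball around `x` whose radius depends only on `𝔢₀`. -/
lemma finite_edges_through (hfin : S.Finite) (hS : Subgroup.closure S = ⊤) (hT : T.IsTree)
    (hadj : ∀ (g : G) (a b : VT), T.Adj a b → T.Adj (g • a) (g • b)) (x : G) :
    {e : VT × VT | T.Adj e.1 e.2 ∧ x ∈ edgeVerts S T p e.1 e.2}.Finite := by
  refine ((finite_baseEdges (p := p) hfin hS hT).biUnion fun e₀ _ =>
    (finite_ball hfin hS (connRadius S (crossSet S T p e₀.1 e₀.2))).image
      fun g => ((x * g⁻¹) • e₀.1, (x * g⁻¹) • e₀.2)).subset ?_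
  rintro ⟨a, b⟩ ⟨hab, c, hc, hx⟩
  simp only [Set.mem_iUnion]
  refine ⟨_, inv_smul_mem_baseEdges hT hadj hab hc, c⁻¹ * x, ?_, by simp⟩
  rw [Set.mem_ofPred_eq, crossSet_smul hT hadj, connRadius_translate]
  exact hx

end Crossing

/-- **Lemma 4.2** (Statement 11, `AIS lem`).  If all edge stabilisers are finitely
generated, one can choose subgraphs `Γ(𝔢) ⊆ Γ` for the edges of `T` satisfying the five
properties of the setup (connected, invariant and cocompact; equivariant; containing all
crossing edges; catching intersections of halfspace neighbourhoods; local finiteness). -/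
theorem edge_subgraphs_exist
    {G VT : Type*} [Group G] [MulAction G VT]
    (S : Finset G) (hSgen : Subgroup.closure (S : Set G) = ⊤)
    (T : SimpleGraph VT) (hact : ActsOnTree G T)
    (hfg : ∀ a b : VT, T.Adj a b → (edgeStab G a b).FG)
    (p : VT) :
    Nonempty (EdgeSubgraphs G (S : Set G) T p) := by
  classical
  obtain ⟨hT, hadj, -, -, -⟩ := hact
  have hfin : (S : Set G).Finite := S.finite_toSet
  have hstab : ∀ {a b : VT} {g : G}, g ∈ edgeStab G a b → g • a = a ∧ g • b = b :=
    fun hg => hg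
  exact ⟨{
    A := edgeVerts (S : Set G) T p
    symm := fun a b => by simp only [edgeVerts, crossSet_symm a b]
    conn := by
      intro a b hab x hx y hy
      obtain ⟨F, hF, hC⟩ := crossSet_cocompact (p := p) hfin hSgen hT hadj hab
      refine exists_edgePath_of_joined hx (isConn_thick_connRadius ?_ x hx y hy)
      refine exists_isConn_thick hSgen (hfg a b hab) ?_ hF hC
      intro h hh z hz
      have := mul_mem_crossSet hT hadj h hz
      rwa [(hstab hh).1, (hstab hh).2] at this
    inva := by
      intro a b hab g hg x hx
      have := edgeVerts_smul (S := (S : Set G)) (p := p) hT hadj g a b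
      rw [(hstab hg).1, (hstab hg).2] at this
      rw [this]
      exact ⟨x, hx, rfl⟩
    cocpt := by
      intro a b hab
      obtain ⟨F, hF, hC⟩ := crossSet_cocompact (p := p) hfin hSgen hT hadj hab
      have hFB := hF.image2 (fun f g : G => f * g)
        (finite_ball hfin hSgen (connRadius (S : Set G) (crossSet (S : Set G) T p a b)))
      refine ⟨hFB.toFinset, ?_⟩
      rintro x ⟨c, hc, hx⟩
      obtain ⟨h, hh, f, hf, rfl⟩ := hC c hc
      refine ⟨h, hh, f * ((h * f)⁻¹ * x), ?_, by group⟩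
      rw [Set.Finite.mem_toFinset]
      exact ⟨f, hf, _, hx, rfl⟩
    equivariant := edgeVerts_smul hT hadj
    crossing := by
      intro a b hab x y hxy hx hy
      refine ⟨crossSet_subset_edgeVerts a b ⟨y, hxy, Or.inl ⟨hx, hy⟩⟩,
        crossSet_subset_edgeVerts a b ⟨x, ?_, Or.inr ⟨hy, hx⟩⟩⟩
      rw [← hxy, wdist, wdist, ← wordLength_inv hSgen (x⁻¹ * y), mul_inv_rev, inv_inv]
    nbhd := by
      rintro a b hab r - x ⟨y, hy, hxy⟩ ⟨y₁, hy₁, hxy₁⟩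
      -- `x` lies on one of the two sides, and a path to the other side has to cross.
      rcases halfspace_or hT hab (x • p) with h | h
      · obtain ⟨z, hz, hle⟩ := exists_crossSet_close hSgen hT hab h hy₁
        exact ⟨z, crossSet_subset_edgeVerts a b hz, hle.trans hxy₁⟩
      · obtain ⟨z, hz, hle⟩ := exists_crossSet_close hSgen hT hab.symm h hy
        rw [crossSet_symm] at hz
        exact ⟨z, crossSet_subset_edgeVerts a b hz, hle.trans hxy⟩
    finmany := fun x y _ =>
      (finite_edges_through hfin hSgen hT hadj x).subset fun e he => ⟨he.1, he.2.1⟩ }⟩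

end MorseGoG
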